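/- arXiv:1811.09774 — 2 statements merged into one kernel-verified Lean document; each statement's English description precedes it below -/
import Mathlib

section
/- Let n ≥ 3. With Ω = dz₂∧dẑ₂∧dz₃∧dẑ₃∧⋯∧dz_{n−1}∧dẑ_{n−1}∧dz_n ∈ ⋀^{2n−3}_R Ω_{R/ℂ}, the iterated contraction satisfies ι_{V₁}ι_{V₂}⋯ι_{V_{n−1}} Ω = (−1)^n A₁ dA₃∧dA₄∧⋯∧dA_n + Σ_{j=3}^{n} (−1)^{n+j} A_j dA₁∧dA₃∧⋯∧dA_{j−1}∧dA_{j+1}∧⋯∧dA_n in ⋀^{n−2}_R Ω_{R/ℂ}. (This is Lemma 3.3 of the paper, the key contraction computation for the two-step flag variety Fℓ_{1,n−1;n}.) -/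
/-!
Lemma 3.3 of the paper: the key contraction computation for the two-step flag
variety `Fℓ_{1,n−1;n}`.

`R = ℂ[z₂,…,z_n, ẑ₂,…,ẑ_{n−1}]`, with conventions `z₁ = 1`, `ẑ_n = 1`,
`A_j = z_j ẑ_j` for `2 ≤ j ≤ n` and `A₁ = A₂ + ∑_{j=3}^n (−1)^j A_j`.
Contraction of `⋀_R Ω_{R/ℂ}` by a ℂ-derivation `V` is interior product by the
`R`-linear functional `Ω_{R/ℂ} → R` determined by `dg ↦ V g`.
-/

set_option synthInstance.maxHeartbeats 1000000
set_option maxHeartbeats 1000000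

noncomputable section

open MvPolynomial

/-- Index type for the `2n−3` variables: `z_j` for `2 ≤ j ≤ n` and `ẑ_j` for
`2 ≤ j ≤ n−1`. -/
abbrev FlagIdx (n : ℕ) := {j : ℕ // 2 ≤ j ∧ j ≤ n} ⊕ {j : ℕ // 2 ≤ j ∧ j ≤ n - 1}

/-- The coordinate ring `R = ℂ[z₂,…,z_n, ẑ₂,…,ẑ_{n−1}]`. -/
abbrev FlagR (n : ℕ) := MvPolynomial (FlagIdx n) ℂ

/-- The coordinate `z_j` (with the convention `z₁ = 1`). -/
def flagZ (n j : ℕ) : FlagR n :=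
  if h : 2 ≤ j ∧ j ≤ n then X (Sum.inl ⟨j, h⟩) else 1

/-- The coordinate `ẑ_j` (with the convention `ẑ_n = 1`). -/
def flagZh (n j : ℕ) : FlagR n :=
  if h : 2 ≤ j ∧ j ≤ n - 1 then X (Sum.inr ⟨j, h⟩) else 1

/-- `A_j = z_j ẑ_j` for `j ≥ 2` (so `A_n = z_n`), and
`A₁ = A₂ + ∑_{j=3}^n (−1)^j A_j`. -/
def flagA (n j : ℕ) : FlagR n :=
  if j = 1 then
    flagZ n 2 * flagZh n 2 + ∑ k ∈ Finset.Icc 3 n, (-1 : FlagR n) ^ k * (flagZ n k * flagZh n k)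
  else flagZ n j * flagZh n j

/-- The ℂ-derivations `V_{i−1} = z_i ∂/∂z_i − ẑ_i ∂/∂ẑ_i` for `2 ≤ i ≤ n−1`, and
`V_{n−1} = z_n ∂/∂z_n + ∑_{j=2}^{n−1} ẑ_j ∂/∂ẑ_j`. -/
def flagV (n i : ℕ) : Derivation ℂ (FlagR n) (FlagR n) :=
  if i = n - 1 then
    MvPolynomial.mkDerivation ℂ (fun s => match s with
      | Sum.inl ⟨j, _⟩ => if j = n then flagZ n j else 0
      | Sum.inr ⟨j, _⟩ => flagZh n j)
  else
    MvPolynomial.mkDerivation ℂ (fun s => match s with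
      | Sum.inl ⟨j, _⟩ => if j = i + 1 then flagZ n j else 0
      | Sum.inr ⟨j, _⟩ => if j = i + 1 then -(flagZh n j) else 0)

/-- Contraction (interior product) of `⋀_A Ω_{A/ℂ}` by the `A`-linear functional
`Ω_{A/ℂ} → A` determined by `dg ↦ V g`, for a ℂ-derivation `V` of `A`. -/
def contrDer {A : Type} [CommRing A] [Algebra ℂ A] (V : Derivation ℂ A A) :
    ExteriorAlgebra A (Ω[A⁄ℂ]) →ₗ[A] ExteriorAlgebra A (Ω[A⁄ℂ]) :=
  CliffordAlgebra.contractLeft ((KaehlerDifferential.linearMapEquivDerivation ℂ A).symm V)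

/-- `Ω = dz₂∧dẑ₂∧⋯∧dz_{n−1}∧dẑ_{n−1}∧dz_n ∈ ⋀^{2n−3}_R Ω_{R/ℂ}`. -/
def flagOmega (n : ℕ) : ExteriorAlgebra (FlagR n) (Ω[FlagR n⁄ℂ]) :=
  (((List.Ico 2 n).map (fun j =>
      ExteriorAlgebra.ι (FlagR n) (KaehlerDifferential.D ℂ (FlagR n) (flagZ n j)) *
      ExteriorAlgebra.ι (FlagR n) (KaehlerDifferential.D ℂ (FlagR n) (flagZh n j)))).prod) *
    ExteriorAlgebra.ι (FlagR n) (KaehlerDifferential.D ℂ (FlagR n) (flagZ n n))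

/-!
For `i < n - 1` the field `V_i` has weights `1` and `-1` on `z_{i+1}` and `ẑ_{i+1}` and kills the
other coordinates, so contracting `dz_{i+1} ∧ dẑ_{i+1}` by it gives
`z_{i+1} dẑ_{i+1} + ẑ_{i+1} dz_{i+1} = dA_{i+1}`. Hence
`ι_{V₁} ⋯ ι_{V_{n-2}} Ω = dA₂ ∧ dA₃ ∧ ⋯ ∧ dA_n = dA₁ ∧ dA₃ ∧ ⋯ ∧ dA_n`, as `A₁ - A₂` is a
combination of `A₃, …, A_n`. Contractions anticommute, so `ι_{V_{n-1}}` may be applied last at the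
cost of the sign `(-1)^(n-2)`; since `V_{n-1} A_j = A_j`, the Leibniz rule gives the formula.
-/

theorem eraseIdx_eq_filter_of_nodup {κ : Type*} [DecidableEq κ] {l : List κ} (hl : l.Nodup)
    {i : ℕ} (hi : i < l.length) : l.eraseIdx i = l.filter (fun k => k ≠ l[i]) := by
  rw [← hl.erase_getElem i hi, hl.erase_eq_filter]
  grind

theorem map_Ico_add_one {β : Type*} (f : ℕ → β) (a b : ℕ) :
    (List.Ico (a + 1) (b + 1)).map f = (List.Ico a b).map fun i => f (i + 1) := by
  rw [← List.Ico.map_add, List.map_map]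
  simp only [Function.comp_def, add_comm 1]

section Clifford

open CliffordAlgebra

variable {R M κ : Type*} [CommRing R] [AddCommGroup M] [Module R M] {Q : QuadraticForm R M}

theorem contractLeft_ι_mul_ι_mul (d : Module.Dual R M) (a b : M) (y : CliffordAlgebra Q) :
    contractLeft d (ι Q a * ι Q b * y) =
      ι Q (d a • b - d b • a) * y + ι Q a * ι Q b * contractLeft d y := by
  simp only [mul_assoc, contractLeft_ι_mul, map_sub, map_smul, mul_sub, sub_mul, mul_smul_comm,
    smul_mul_assoc]
  abel

theorem contractLeft_prod_map_ι_mul_eq_zero (d : Module.Dual R M) (v : κ → M) (l : List κ)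
    (hv : ∀ k ∈ l, d (v k) = 0) {y : CliffordAlgebra Q} (hy : contractLeft d y = 0) :
    contractLeft d ((l.map fun k => ι Q (v k)).prod * y) = 0 := by
  induction l with
  | nil => simpa using hy
  | cons a l ih =>
    rw [List.forall_mem_cons] at hv
    rw [List.map_cons, List.prod_cons, mul_assoc, contractLeft_ι_mul, hv.1, ih hv.2, zero_smul,
      mul_zero, sub_zero]

theorem contractLeft_prod_map_ι (d : Module.Dual R M) (v : κ → M) (l : List κ) :
    contractLeft d (l.map fun k => ι Q (v k)).prod =
      ∑ i : Fin l.length, ((-1) ^ (i : ℕ) * d (v l[i])) •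
        ((l.eraseIdx i).map fun k => ι Q (v k)).prod := by
  induction l with
  | nil => simp
  | cons a l ih =>
    simp only [List.map_cons, List.prod_cons, contractLeft_ι_mul, ih, Finset.mul_sum,
      List.length_cons, Fin.sum_univ_succ, sub_eq_add_neg, ← Finset.sum_neg_distrib]
    congr 1
    · simp
    · refine Finset.sum_congr rfl fun i _ => ?_
      simp [pow_succ]

theorem foldr_contractLeft_contractLeft (d : κ → Module.Dual R M) (e : Module.Dual R M)
    (l : List κ) (y : CliffordAlgebra Q) :
    l.foldr (fun i => contractLeft (d i)) (contractLeft e y) =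
      (-1 : R) ^ l.length • contractLeft e (l.foldr (fun i => contractLeft (d i)) y) := by
  induction l with
  | nil => simp
  | cons a l ih =>
    rw [List.foldr_cons, ih, map_smul, contractLeft_comm, List.foldr_cons, List.length_cons,
      pow_succ, mul_smul, neg_one_smul]

theorem foldr_contractLeft_ι_mul_ι_mul (d : κ → Module.Dual R M) (l : List κ) {a b : M}
    (ha : ∀ i ∈ l, d i a = 0) (hb : ∀ i ∈ l, d i b = 0) (y : CliffordAlgebra Q) :
    l.foldr (fun i => contractLeft (d i)) (ι Q a * ι Q b * y) =
      ι Q a * ι Q b * l.foldr (fun i => contractLeft (d i)) y := by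
  induction l with
  | nil => rfl
  | cons i l ih =>
    rw [List.forall_mem_cons] at ha hb
    rw [List.foldr_cons, ih ha.2 hb.2, contractLeft_ι_mul_ι_mul, ha.1, hb.1]
    simp

theorem foldr_contractLeft_prod_map_ι_mul_ι (d : κ → Module.Dual R M) (p q : κ → M) {l : List κ}
    (hl : l.Nodup) (hp : ∀ i ∈ l, ∀ j ∈ l, j ≠ i → d i (p j) = 0)
    (hq : ∀ i ∈ l, ∀ j ∈ l, j ≠ i → d i (q j) = 0) {y : CliffordAlgebra Q}
    (hy : ∀ i ∈ l, contractLeft (d i) y = 0) :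
    l.foldr (fun i => contractLeft (d i)) ((l.map fun i => ι Q (p i) * ι Q (q i)).prod * y) =
      (l.map fun i => ι Q (d i (p i) • q i - d i (q i) • p i)).prod * y := by
  induction l with
  | nil => simp
  | cons a l ih =>
    obtain ⟨ha, hl⟩ := List.nodup_cons.1 hl
    have ne_of_mem : ∀ i ∈ l, i ≠ a := fun i hi => ne_of_mem_of_not_mem hi ha
    simp only [List.forall_mem_cons] at hp hq hy
    have hrest : contractLeft (d a)
        ((l.map fun i => ι Q (d i (p i) • q i - d i (q i) • p i)).prod * y) = 0 :=
      contractLeft_prod_map_ι_mul_eq_zero _ _ _ (fun i hi => by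
        simp [hp.1.2 i hi (ne_of_mem i hi), hq.1.2 i hi (ne_of_mem i hi)]) hy.1
    rw [List.foldr_cons, List.map_cons, List.prod_cons, mul_assoc _ _ y,
      foldr_contractLeft_ι_mul_ι_mul d l (fun i hi => (hp.2 i hi).1 (ne_of_mem i hi).symm)
        (fun i hi => (hq.2 i hi).1 (ne_of_mem i hi).symm),
      ih hl (fun i hi => (hp.2 i hi).2) (fun i hi => (hq.2 i hi).2) hy.2,
      contractLeft_ι_mul_ι_mul, hrest, mul_zero, add_zero, List.map_cons, List.prod_cons, mul_assoc]

theorem contractLeft_prod_map_ι_Ico (d : Module.Dual R M) (v : ℕ → M) (a b : ℕ) :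
    contractLeft d ((List.Ico a b).map fun k => ι Q (v k)).prod =
      ∑ j ∈ Finset.Ico a b, ((-1) ^ (a + j) * d (v j)) •
        (((List.Ico a b).filter fun k => k ≠ j).map fun k => ι Q (v k)).prod := by
  rw [contractLeft_prod_map_ι, Finset.sum_Ico_eq_sum_range, ← Fin.sum_univ_eq_sum_range]
  refine Fintype.sum_equiv (finCongr (List.Ico.length a b)) _ _ fun i => ?_
  have getElem_Ico : (List.Ico a b)[(i : ℕ)] = a + i := by simp [List.Ico]
  have sign : (-1 : R) ^ (a + (a + i : ℕ)) = (-1) ^ (i : ℕ) := by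
    rw [← add_assoc, pow_add, Even.neg_one_pow ⟨a, rfl⟩, one_mul]
  rw [eraseIdx_eq_filter_of_nodup (List.Ico.nodup a b) i.2]
  simp only [finCongr_apply, Fin.val_cast, Fin.getElem_fin, getElem_Ico, sign]

end Clifford

section Exterior

open ExteriorAlgebra

variable {R M κ : Type*} [CommRing R] [AddCommGroup M] [Module R M]

theorem ι_mul_prod_map_ι_of_mem_span (v : κ → M) (l : List κ) {x : M}
    (hx : x ∈ Submodule.span R (v '' {k | k ∈ l})) :
    ι R x * (l.map fun k => ι R (v k)).prod = 0 := by
  induction hx using Submodule.span_induction with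
  | mem x hx =>
    obtain ⟨k, hk, rfl⟩ := hx
    obtain ⟨i, rfl⟩ := List.mem_iff_get.1 hk
    have h := ι_mul_prod_list (R := R) (v ∘ l.get) i
    rwa [show (fun i => ι R ((v ∘ l.get) i)) = (fun k => ι R (v k)) ∘ l.get from rfl,
      ← List.map_ofFn, List.ofFn_get] at h
  | zero => simp
  | add x y _ _ hx hy => rw [map_add, add_mul, hx, hy, add_zero]
  | smul c x _ hx => rw [map_smul, smul_mul_assoc, hx, smul_zero]

end Exterior

theorem derivation_neg_one_pow_mul {S A N : Type*} [CommRing S] [CommRing A] [Algebra S A]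
    [AddCommGroup N] [Module S N] [Module A N] (D : Derivation S A N) (k : ℕ) (x : A) :
    D ((-1) ^ k * x) = (-1 : A) ^ k • D x := by
  simp [Derivation.leibniz_pow]

section Flag

open CliffordAlgebra (contractLeft)
open ExteriorAlgebra (ι)
open KaehlerDifferential (D)

theorem contrDer_eq_contractLeft {A : Type} [CommRing A] [Algebra ℂ A] (V : Derivation ℂ A A) :
    contrDer V = contractLeft V.liftKaehlerDifferential :=
  rfl

theorem foldr_contrDer_contrDer {A : Type} [CommRing A] [Algebra ℂ A] {κ : Type*}
    (V : κ → Derivation ℂ A A) (W : Derivation ℂ A A) (l : List κ)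
    (ω : ExteriorAlgebra A (Ω[A⁄ℂ])) :
    l.foldr (fun i => contrDer (V i)) (contrDer W ω) =
      (-1 : A) ^ l.length • contrDer W (l.foldr (fun i => contrDer (V i)) ω) :=
  foldr_contractLeft_contractLeft _ _ l ω

variable {n i j : ℕ}

theorem flagZh_self : flagZh n n = 1 := dif_neg (by omega)

theorem flagV_flagZ (hi : i ≠ n - 1) (hj : 2 ≤ j ∧ j ≤ n) :
    flagV n i (flagZ n j) = if j = i + 1 then flagZ n j else 0 := by
  simp [flagV, flagZ, hi, hj]

theorem flagV_flagZh (hi : i ≠ n - 1) (hj : 2 ≤ j ∧ j ≤ n - 1) :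
    flagV n i (flagZh n j) = if j = i + 1 then -flagZh n j else 0 := by
  simp [flagV, flagZh, hi, hj]

theorem flagV_last_flagZ (hj : 2 ≤ j ∧ j ≤ n) :
    flagV n (n - 1) (flagZ n j) = if j = n then flagZ n j else 0 := by
  simp [flagV, flagZ, hj]

theorem flagV_last_flagZh (hj : 2 ≤ j ∧ j ≤ n - 1) :
    flagV n (n - 1) (flagZh n j) = flagZh n j := by
  simp [flagV, flagZh, hj]

theorem flagA_of_ne_one (hj : j ≠ 1) : flagA n j = flagZ n j * flagZh n j := if_neg hj

theorem flagA_self (hn : n ≠ 1) : flagA n n = flagZ n n := by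
  rw [flagA_of_ne_one hn, flagZh_self, mul_one]

theorem flagA_one :
    flagA n 1 = flagA n 2 + ∑ k ∈ Finset.Icc 3 n, (-1 : FlagR n) ^ k * flagA n k := by
  rw [flagA, if_pos rfl, flagA_of_ne_one (by decide)]
  congr 1
  refine Finset.sum_congr rfl fun k hk => ?_
  rw [flagA_of_ne_one (by grind)]

theorem flagV_last_flagA_of_two_le (hj : 2 ≤ j ∧ j ≤ n) :
    flagV n (n - 1) (flagA n j) = flagA n j := by
  rw [flagA_of_ne_one (by omega), Derivation.leibniz, flagV_last_flagZ hj]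
  rcases hj.2.eq_or_lt with rfl | hjn
  · simp [flagZh_self]
  · rw [flagV_last_flagZh ⟨hj.1, by omega⟩, if_neg hjn.ne, smul_zero, add_zero, smul_eq_mul]

theorem flagV_last_flagA (hj : 1 ≤ j ∧ j ≤ n) (hn : 2 ≤ n) :
    flagV n (n - 1) (flagA n j) = flagA n j := by
  rcases hj.1.eq_or_lt with rfl | hj'
  · rw [flagA_one, map_add, map_sum, flagV_last_flagA_of_two_le ⟨le_rfl, hn⟩]
    congr 1
    refine Finset.sum_congr rfl fun k hk => ?_
    rw [derivation_neg_one_pow_mul, flagV_last_flagA_of_two_le (by grind), smul_eq_mul]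
  · exact flagV_last_flagA_of_two_le ⟨hj', hj.2⟩

theorem flagV_flagZ_smul_D_flagZh_sub (hi : 1 ≤ i) (hin : i < n - 1) :
    flagV n i (flagZ n (i + 1)) • D ℂ (FlagR n) (flagZh n (i + 1)) -
        flagV n i (flagZh n (i + 1)) • D ℂ (FlagR n) (flagZ n (i + 1)) =
      D ℂ (FlagR n) (flagA n (i + 1)) := by
  rw [flagV_flagZ hin.ne (by omega), flagV_flagZh hin.ne (by omega), if_pos rfl, if_pos rfl,
    flagA_of_ne_one (by omega), Derivation.leibniz, neg_smul, sub_neg_eq_add]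

theorem contrDer_flagV_ι_D_flagZ_self (hin : i < n - 1) :
    contrDer (flagV n i) (ι (FlagR n) (D ℂ (FlagR n) (flagZ n n))) = 0 := by
  rw [contrDer_eq_contractLeft, CliffordAlgebra.contractLeft_ι,
    Derivation.liftKaehlerDifferential_comp_D, flagV_flagZ hin.ne (by omega), if_neg (by omega),
    map_zero]

theorem foldr_contrDer_flagOmega (hn : 2 ≤ n) :
    (List.Ico 1 (n - 1)).foldr (fun i => contrDer (flagV n i)) (flagOmega n) =
      ((List.Ico 2 (n + 1)).map fun j => ι (FlagR n) (D ℂ (FlagR n) (flagA n j))).prod := by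
  have reindex {β : Type} (f : ℕ → β) :
      (List.Ico 2 n).map f = (List.Ico 1 (n - 1)).map fun i => f (i + 1) := by
    rw [← map_Ico_add_one, Nat.sub_add_cancel (by omega)]
  rw [flagOmega, List.Ico.succ_top hn, List.map_append, List.prod_append, List.map_singleton,
    List.prod_singleton, flagA_self (by omega), reindex, reindex]
  simp only [contrDer_eq_contractLeft]
  rw [foldr_contractLeft_prod_map_ι_mul_ι _ _ _ (List.Ico.nodup 1 (n - 1))]
  · congr 2
    refine List.map_congr_left fun i hi => ?_
    rw [List.Ico.mem] at hi
    simp only [Derivation.liftKaehlerDifferential_comp_D, flagV_flagZ_smul_D_flagZh_sub hi.1 hi.2]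
  · intro i hi j hj hji
    rw [List.Ico.mem] at hi hj
    rw [Derivation.liftKaehlerDifferential_comp_D, flagV_flagZ hi.2.ne (by omega),
      if_neg (by omega)]
  · intro i hi j hj hji
    rw [List.Ico.mem] at hi hj
    rw [Derivation.liftKaehlerDifferential_comp_D, flagV_flagZh hi.2.ne (by omega),
      if_neg (by omega)]
  · intro i hi
    rw [List.Ico.mem] at hi
    exact contrDer_flagV_ι_D_flagZ_self hi.2

theorem prod_map_ι_D_flagA (hn : 2 ≤ n) :
    ((List.Ico 2 (n + 1)).map fun j => ι (FlagR n) (D ℂ (FlagR n) (flagA n j))).prod =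
      ι (FlagR n) (D ℂ (FlagR n) (flagA n 1)) *
        ((List.Ico 3 (n + 1)).map fun j => ι (FlagR n) (D ℂ (FlagR n) (flagA n j))).prod := by
  have hmem : D ℂ (FlagR n) (flagA n 1) - D ℂ (FlagR n) (flagA n 2) ∈ Submodule.span (FlagR n)
      ((fun j => D ℂ (FlagR n) (flagA n j)) '' {k | k ∈ List.Ico 3 (n + 1)}) := by
    rw [flagA_one, map_add, add_sub_cancel_left, map_sum]
    refine Submodule.sum_mem _ fun k hk => ?_
    rw [derivation_neg_one_pow_mul]
    refine Submodule.smul_mem _ _ (Submodule.subset_span ⟨k, ?_, rfl⟩)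
    simpa [Nat.lt_succ_iff] using hk
  have hzero := ι_mul_prod_map_ι_of_mem_span _ _ hmem
  rw [map_sub, sub_mul, sub_eq_zero] at hzero
  rw [List.Ico.eq_cons (by omega), List.map_cons, List.prod_cons, hzero]

theorem contrDer_flagV_last_prod_map_ι_D_flagA (hn : 2 ≤ n) :
    contrDer (flagV n (n - 1)) (ι (FlagR n) (D ℂ (FlagR n) (flagA n 1)) *
        ((List.Ico 3 (n + 1)).map fun k => ι (FlagR n) (D ℂ (FlagR n) (flagA n k))).prod) =
      flagA n 1 •
        ((List.Ico 3 (n + 1)).map fun k => ι (FlagR n) (D ℂ (FlagR n) (flagA n k))).prod +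
      ∑ j ∈ Finset.Icc 3 n, ((-1) ^ j * flagA n j) •
        (ι (FlagR n) (D ℂ (FlagR n) (flagA n 1)) *
          (((List.Ico 3 (n + 1)).filter fun k => k ≠ j).map fun k =>
            ι (FlagR n) (D ℂ (FlagR n) (flagA n k))).prod) := by
  rw [contrDer_eq_contractLeft, CliffordAlgebra.contractLeft_ι_mul, contractLeft_prod_map_ι_Ico,
    Derivation.liftKaehlerDifferential_comp_D, flagV_last_flagA (by omega) hn, sub_eq_add_neg,
    Finset.mul_sum, ← Finset.sum_neg_distrib, Finset.Ico_add_one_right_eq_Icc]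
  congr 1
  refine Finset.sum_congr rfl fun j hj => ?_
  rw [Finset.mem_Icc] at hj
  rw [Derivation.liftKaehlerDifferential_comp_D, flagV_last_flagA (by omega) hn, mul_smul_comm,
    ← neg_smul]
  congr 1
  ring

end Flag

/-- Lemma 3.3:
`ι_{V₁}⋯ι_{V_{n−1}} Ω
 = (−1)^n A₁ dA₃∧⋯∧dA_n + ∑_{j=3}^n (−1)^{n+j} A_j dA₁∧dA₃∧⋯∧\widehat{dA_j}∧⋯∧dA_n`. -/
theorem flag_contraction_lemma (n : ℕ) (hn : 3 ≤ n) :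
    (List.Ico 1 n).foldr (fun i ω => contrDer (flagV n i) ω) (flagOmega n) =
      ((-1 : FlagR n) ^ n * flagA n 1) •
        (((List.Ico 3 (n + 1)).map (fun k =>
          ExteriorAlgebra.ι (FlagR n) (KaehlerDifferential.D ℂ (FlagR n) (flagA n k)))).prod)
      + ∑ j ∈ Finset.Icc 3 n, ((-1 : FlagR n) ^ (n + j) * flagA n j) •
          (ExteriorAlgebra.ι (FlagR n) (KaehlerDifferential.D ℂ (FlagR n) (flagA n 1)) *
            (((List.Ico 3 (n + 1)).filter (fun k => k ≠ j)).map (fun k =>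
              ExteriorAlgebra.ι (FlagR n) (KaehlerDifferential.D ℂ (FlagR n) (flagA n k)))).prod) := by
  have split_last : List.Ico 1 n = List.Ico 1 (n - 1) ++ [n - 1] := by
    rw [← List.Ico.succ_top (by omega), Nat.sub_add_cancel (by omega)]
  have sign : (-1 : FlagR n) ^ (List.Ico 1 (n - 1)).length = (-1) ^ n := by
    obtain ⟨m, rfl⟩ : ∃ m, n = m + 2 := ⟨n - 2, by omega⟩
    simp [pow_add]
  rw [split_last, List.foldr_append, List.foldr_cons, List.foldr_nil, foldr_contrDer_contrDer,
    foldr_contrDer_flagOmega (by omega), prod_map_ι_D_flagA (by omega),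
    contrDer_flagV_last_prod_map_ι_D_flagA (by omega), sign, smul_add, Finset.smul_sum]
  simp only [smul_smul, pow_add, mul_assoc]

end
end

section
/- Let R be a commutative ring, M an R-module, and m ≥ 2 an integer. Let z, a₁, …, a_m be invertible elements of R satisfying z + a₁ + ⋯ + a_m = 0, let ω₁, …, ω_m be elements of M, and set ζ = −(ω₁ + ⋯ + ω_m). Then in the exterior algebra ⋀_R M: (a₁^{−1}ω₁ − z^{−1}ζ) ∧ (a₂^{−1}ω₂ − z^{−1}ζ) ∧ ⋯ ∧ (a_{m−2}^{−1}ω_{m−2} − z^{−1}ζ) ∧ (a_m^{−1}ω_m − z^{−1}ζ) = (z a₁ a₂ ⋯ a_{m−2} a_m)^{−1} · Σ_{j=1}^{m} (−1)^{m+j} a_j ω₁∧⋯∧ω_{j−1}∧ω_{j+1}∧⋯∧ω_m. (This is the wedge-product identity established in the proof of Proposition 3.8 of the paper, applied there with z = z₁, a_j = A_j, ω_j = dA_j and ζ = dz₁.) -/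
/-!
The wedge-product identity established in the proof of Proposition 3.8 of the
paper (applied there with `z = z₁`, `a_j = A_j`, `ω_j = dA_j`, `ζ = dz₁`).
Note that the wedge factor with index `m−1` is omitted from the left-hand
product (the indices run over `{1, …, m−2, m}`).
-/

/-!
Suppose first that `M` carries a linear form `d` with `d ω_j = a_j`. Then `d ζ = z`, so every
factor `a_k⁻¹ω_k − z⁻¹ζ` lies in `ker d`, and contracting `ζ ∧ W` with `d` returns `z W`, where `W`
is the left-hand side. But `ζ ∧ W` is a multiple of `ζ ∧ ⋀_{k ≠ m-1} ω_k`, that is, of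
`ω₁ ∧ ⋯ ∧ ω_m`, whose contraction is the alternating sum on the right. In general such a `d` need
not exist on `M`; it does on `R × M`, for the vectors `(a_j, ω_j)`, and the identity there projects
to the one in `M`.
-/

namespace WedgeQuadric

variable {R M κ : Type*} [CommRing R] [AddCommGroup M] [Module R M]

section Contraction

open CliffordAlgebra

variable {Q : QuadraticForm R M} (d : Module.Dual R M)

theorem contractLeft_prod_map_ι (l : List M) :
    contractLeft d (l.map (ι Q)).prod =
      ∑ i : Fin l.length, ((-1) ^ (i : ℕ) * d l[i]) • ((l.eraseIdx i).map (ι Q)).prod := by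
  induction l with
  | nil => simp
  | cons x l ih =>
    simp only [List.map_cons, List.prod_cons, contractLeft_ι_mul, ih, Finset.mul_sum]
    simp [Fin.sum_univ_succ, pow_succ, sub_eq_add_neg]

variable {d}

theorem contractLeft_ι_mul_prod_map_ι_of_forall_eq_zero (x : M) {l : List M}
    (hl : ∀ y ∈ l, d y = 0) :
    contractLeft d (ι Q x * (l.map (ι Q)).prod) = d x • (l.map (ι Q)).prod := by
  have contract_eq_zero : contractLeft d (l.map (ι Q)).prod = 0 := by
    rw [contractLeft_prod_map_ι]
    exact Finset.sum_eq_zero fun i _ => by rw [hl l[i] (List.getElem_mem _), mul_zero, zero_smul]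
  rw [contractLeft_ι_mul, contract_eq_zero, mul_zero, sub_zero]

end Contraction

open ExteriorAlgebra

theorem ι_mul_ι_mul (x y : M) (t : ExteriorAlgebra R M) :
    ι R x * (ι R y * t) = -(ι R y * (ι R x * t)) := by
  rw [← mul_assoc, eq_neg_of_add_eq_zero_left (ι_add_mul_swap x y), neg_mul, mul_assoc]

theorem ι_mul_prod_map_ι_of_mem {x : M} {l : List M} (hx : x ∈ l) :
    ι R x * (l.map (ι R)).prod = 0 := by
  obtain ⟨i, rfl⟩ := List.get_of_mem hx
  simpa [← List.map_ofFn] using ι_mul_prod_list (R := R) l.get i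

theorem ι_sum_mul_prod_map_ι {s l : List M} (hs : s ⊆ l) :
    ι R s.sum * (l.map (ι R)).prod = 0 := by
  rw [map_list_sum, ← List.sum_map_mul_right]
  exact List.sum_eq_zero (by simpa using fun x hx => ι_mul_prod_map_ι_of_mem (hs hx))

theorem ι_getElem_mul_prod_map_ι_eraseIdx (l : List M) (p : ℕ) (hp : p < l.length) :
    ι R l[p] * ((l.eraseIdx p).map (ι R)).prod = (-1 : R) ^ p • (l.map (ι R)).prod := by
  induction l generalizing p with
  | nil => simp at hp
  | cons x l ih =>
    cases p with
    | zero => simp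
    | succ p =>
      simp only [List.getElem_cons_succ, List.eraseIdx_cons_succ, List.map_cons, List.prod_cons]
      rw [ι_mul_ι_mul, ih p (by simpa using hp), mul_smul_comm, pow_succ, mul_neg_one, neg_smul]

theorem ι_sum_mul_prod_map_ι_eraseIdx (l : List M) {p : ℕ} (hp : p < l.length) :
    ι R l.sum * ((l.eraseIdx p).map (ι R)).prod = (-1 : R) ^ p • (l.map (ι R)).prod := by
  rw [← List.CommMonoid.add_sum_eraseIdx hp, map_add, add_mul,
    ι_sum_mul_prod_map_ι (List.Subset.refl _), add_zero, ι_getElem_mul_prod_map_ι_eraseIdx]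

theorem ι_mul_prod_map_ι_smul_sub_smul (c : κ → R) (v : κ → M) (b : R) (x : M) (l : List κ) :
    ι R x * (l.map fun k => ι R (c k • v k - b • x)).prod =
      (l.map c).prod • (ι R x * (l.map fun k => ι R (v k)).prod) := by
  induction l with
  | nil => simp
  | cons k l ih =>
    simp only [List.map_cons, List.prod_cons]
    generalize (l.map fun k => ι R (c k • v k - b • x)).prod = t at ih ⊢
    rw [ι_mul_ι_mul, ih, ι_mul_ι_mul x (v k), map_sub, map_smul, map_smul, sub_mul]
    simp [← mul_assoc, mul_smul, smul_comm (c k)]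

theorem prod_map_ι_inv_smul_sub_eq_contractLeft {d : Module.Dual R M} {z : Rˣ} {ζ : M}
    (hζ : d ζ = z) {u : κ → Rˣ} {v : κ → M} {l : List κ} (hu : ∀ k ∈ l, d (v k) = u k) :
    (l.map fun k => ι R ((u k)⁻¹ • v k - (↑z⁻¹ : R) • ζ)).prod =
      (↑(z * (l.map u).prod)⁻¹ : R) •
        CliffordAlgebra.contractLeft d (ι R ζ * (l.map fun k => ι R (v k)).prod) := by
  have mem_ker : ∀ y ∈ l.map fun k => (u k)⁻¹ • v k - (↑z⁻¹ : R) • ζ, d y = 0 := by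
    simp only [List.mem_map, forall_exists_index, and_imp, forall_apply_eq_imp_iff₂]
    intro k hk
    simp [Units.smul_def, hu k hk, hζ]
  have contract_eq := contractLeft_ι_mul_prod_map_ι_of_forall_eq_zero (Q := 0) ζ mem_ker
  have prod_inv : (l.map fun k => (↑(u k)⁻¹ : R)).prod = ↑(l.map u).prod⁻¹ := by
    simpa [List.prod_inv, Function.comp_def] using
      (map_list_prod (Units.coeHom R) ((l.map u).map Inv.inv)).symm
  have wedge_eq := ι_mul_prod_map_ι_smul_sub_smul (fun k => (↑(u k)⁻¹ : R)) v (↑z⁻¹ : R) ζ l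
  simp only [List.map_map, Function.comp_def, Units.smul_def] at contract_eq wedge_eq ⊢
  rw [wedge_eq, prod_inv, map_smul, hζ] at contract_eq
  rw [mul_inv, Units.val_mul, mul_smul, contract_eq, smul_smul, Units.inv_mul, one_smul]

theorem prod_map_ι_inv_smul_sub_eraseIdx_of_dual (d : Module.Dual R M) {l : List κ} {p : ℕ}
    (hp : p < l.length) {z : Rˣ} {u : κ → Rˣ} {v : κ → M}
    (hu : ∀ k ∈ l.eraseIdx p, d (v k) = u k) (hz : z + d (l.map v).sum = 0) :
    ((l.eraseIdx p).map fun k => ι R ((u k)⁻¹ • v k - (↑z⁻¹ : R) • -(l.map v).sum)).prod =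
      (↑(z * ((l.eraseIdx p).map u).prod)⁻¹ : R) • ∑ i : Fin l.length,
        ((-1) ^ (p + i + 1) * d (v l[i])) • ((l.eraseIdx i).map fun k => ι R (v k)).prod := by
  have wedge_eq : ι R (-(l.map v).sum) * ((l.eraseIdx p).map fun k => ι R (v k)).prod =
      (-1 : R) ^ (p + 1) • ((l.map v).map (ι R)).prod := by
    have sum_wedge := ι_sum_mul_prod_map_ι_eraseIdx (R := R) (l.map v) (p := p) (by simpa using hp)
    rw [List.eraseIdx_map, List.map_map] at sum_wedge
    rw [map_neg, neg_mul, pow_succ, mul_neg_one, neg_smul, ← sum_wedge]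
    rfl
  have hζ : d (-(l.map v).sum) = z := by rw [map_neg, eq_neg_of_add_eq_zero_left hz]
  rw [prod_map_ι_inv_smul_sub_eq_contractLeft hζ hu, wedge_eq, map_smul, contractLeft_prod_map_ι,
    Finset.smul_sum]
  refine congrArg _ (Fintype.sum_equiv (finCongr (by simp)) _ _ fun i => ?_)
  rw [smul_smul, ← mul_assoc, ← pow_add, List.eraseIdx_map, List.map_map, add_right_comm]
  simp [Function.comp_def, ExteriorAlgebra.ι]

theorem eraseIdx_penultimate_Ico {s n : ℕ} (h : s ≤ n) :
    (List.Ico s (n + 2)).eraseIdx (n - s) = List.Ico s n ++ [n + 1] := by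
  rw [List.Ico.succ_top (by omega), List.Ico.succ_top h, List.append_assoc,
    List.eraseIdx_append_of_length_le (by simp)]
  simp

theorem getElem_Ico {s t i : ℕ} (hi : i < (List.Ico s t).length) : (List.Ico s t)[i] = s + i := by
  simp [List.Ico]

theorem eraseIdx_Ico {s t i : ℕ} (hi : i < (List.Ico s t).length) :
    (List.Ico s t).eraseIdx i = (List.Ico s t).filter (· ≠ s + i) := by
  rw [← (List.Ico.nodup s t).erase_getElem i hi, (List.Ico.nodup s t).erase_eq_filter, getElem_Ico]
  exact List.filter_congr fun k _ => by grind

theorem alternating_sum_eraseIdx_Ico (p s t : ℕ) (a : ℕ → R) (F : List ℕ → M) :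
    ∑ i : Fin (List.Ico s t).length,
        ((-1) ^ (p + i + 1) * a (List.Ico s t)[i]) • F ((List.Ico s t).eraseIdx i) =
      ∑ j ∈ Finset.Ico s t,
        ((-1) ^ (p + (s + 1) + j) * a j) • F ((List.Ico s t).filter (· ≠ j)) := by
  rw [Finset.sum_Ico_eq_sum_range, ← List.Ico.length, Finset.sum_range]
  refine Finset.sum_congr rfl fun i _ => ?_
  have sign_eq : (-1 : R) ^ (p + (s + 1) + (s + i)) = (-1) ^ (p + i + 1) := by
    rw [show p + (s + 1) + (s + i) = p + i + 1 + 2 * s by omega, pow_add, pow_mul, neg_one_sq,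
      one_pow, mul_one]
  rw [Fin.getElem_fin, getElem_Ico, eraseIdx_Ico i.2, sign_eq]

end WedgeQuadric

/-- Positions in `l` are counted from `0`, so that the sign `(-1) ^ (m + j)` of the paper, where the
factor in position `m - 2` is omitted, reads `(-1) ^ (p + i + 1)` with `p = m - 2`, `i = j - 1`. -/
theorem wedge_identity_quadric_general {R M κ : Type*} [CommRing R] [AddCommGroup M] [Module R M]
    (l : List κ) {p : ℕ} (hp : p < l.length) (z : Rˣ) (a : κ → R) (u : κ → Rˣ)
    (hu : ∀ k ∈ l.eraseIdx p, a k = u k) (ω : κ → M) (hza : z + (l.map a).sum = 0) :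
    ((l.eraseIdx p).map fun k =>
        ExteriorAlgebra.ι R ((u k)⁻¹ • ω k - (↑z⁻¹ : R) • -(l.map ω).sum)).prod =
      (↑(z * ((l.eraseIdx p).map u).prod)⁻¹ : R) • ∑ i : Fin l.length,
        ((-1) ^ (p + i + 1) * a l[i]) •
          ((l.eraseIdx i).map fun k => ExteriorAlgebra.ι R (ω k)).prod := by
  let v : κ → R × M := fun k => (a k, ω k)
  have fst_sum : (l.map v).sum.1 = (l.map a).sum := by
    simpa [Function.comp_def] using map_list_sum (LinearMap.fst R R M) (l.map v)
  have snd_sum : (l.map v).sum.2 = (l.map ω).sum := by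
    simpa [Function.comp_def] using map_list_sum (LinearMap.snd R R M) (l.map v)
  have identity_in_prod := WedgeQuadric.prod_map_ι_inv_smul_sub_eraseIdx_of_dual
    (LinearMap.fst R R M) hp (v := v) hu (by rwa [LinearMap.fst_apply, fst_sum])
  simpa [map_list_prod, Function.comp_def, snd_sum, v] using
    congrArg (ExteriorAlgebra.map (LinearMap.snd R R M)) identity_in_prod

/-- For invertible `z, a₁, …, a_m ∈ R` with `z + a₁ + ⋯ + a_m = 0`,
`ω₁, …, ω_m ∈ M` and `ζ = −(ω₁ + ⋯ + ω_m)`: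
`(a₁⁻¹ω₁ − z⁻¹ζ) ∧ ⋯ ∧ (a_{m−2}⁻¹ω_{m−2} − z⁻¹ζ) ∧ (a_m⁻¹ω_m − z⁻¹ζ)
 = (za₁⋯a_{m−2}a_m)⁻¹ · ∑_{j=1}^m (−1)^{m+j} a_j ω₁∧⋯∧ω_{j−1}∧ω_{j+1}∧⋯∧ω_m`. -/
theorem wedge_identity_quadric {R M : Type*} [CommRing R] [AddCommGroup M] [Module R M]
    (m : ℕ) (hm : 2 ≤ m) (z : Rˣ) (a : ℕ → Rˣ) (ω : ℕ → M)
    (hza : (z : R) + ∑ i ∈ Finset.Icc 1 m, (a i : R) = 0) :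
    (((List.Ico 1 (m - 1)).map (fun k =>
          ExteriorAlgebra.ι R (((a k)⁻¹ : Rˣ) • ω k -
            ((z⁻¹ : Rˣ) : R) • (-(∑ i ∈ Finset.Icc 1 m, ω i))))).prod) *
        ExteriorAlgebra.ι R (((a m)⁻¹ : Rˣ) • ω m -
          ((z⁻¹ : Rˣ) : R) • (-(∑ i ∈ Finset.Icc 1 m, ω i))) =
      ((((z * (∏ k ∈ Finset.Icc 1 (m - 2), a k) * a m)⁻¹ : Rˣ) : R) •
        ∑ j ∈ Finset.Icc 1 m, ((-1 : R) ^ (m + j) * (a j : R)) •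
          (((List.Ico 1 (m + 1)).filter (fun k => k ≠ j)).map (fun k =>
            ExteriorAlgebra.ι R (ω k))).prod) := by
  obtain ⟨n, rfl⟩ : ∃ n, m = n + 2 := ⟨m - 2, by omega⟩
  have eraseIdx_eq : (List.Ico 1 (n + 2 + 1)).eraseIdx n = List.Ico 1 (n + 1) ++ [n + 2] :=
    WedgeQuadric.eraseIdx_penultimate_Ico (Nat.le_add_left 1 n)
  have sum_eq := WedgeQuadric.alternating_sum_eraseIdx_Ico n 1 (n + 2 + 1) (fun k => (a k : R))
    fun l => (l.map fun k => ExteriorAlgebra.ι R (ω k)).prod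
  have key := wedge_identity_quadric_general (List.Ico 1 (n + 2 + 1)) (p := n)
    (by rw [List.Ico.length]; omega) z (fun k => (a k : R)) a (fun _ _ => rfl) ω hza
  rw [sum_eq, eraseIdx_eq] at key
  simp only [List.map_append, List.prod_append, List.map_singleton, List.prod_singleton,
    ← mul_assoc] at key
  exact key
end
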